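/- arXiv:2203.15091 — 2 statements merged into one kernel-verified Lean document; each statement's English description precedes it below -/
import Mathlib

section
/- Fix an integer n ≥ 2 and constants p, s ≥ 0. Let μ be a strictly positive probability measure on Ω_n = {0,1}^n. Then Σ_{η ∈ Ω_n} μ(η) ((p L_ta + s L_ss)[log μ])(η) ≤ −(p + 2s) 𝔇_n(μ) + p Σ_{η ∈ Ω_n} (η_n − η₁) μ(η), where 𝔇_n(μ) = (1/2) Σ_{η ∈ Ω_n} Σ_{i=1}^{n−1} (√(μ(η^{i,i+1})) − √(μ(η)))². (The bulk entropy-production estimate in the proof of Lemma 3.3, with s = σ n^κ.) -/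
open Finset

/-- Real value of an occupation variable. -/
def b2r (b : Bool) : ℝ := if b then 1 else 0

/-- Exchange the coordinates `i` and `j` of a configuration. -/
def swapAt {n : ℕ} (η : Fin n → Bool) (i j : Fin n) : Fin n → Bool :=
  η ∘ Equiv.swap i j

/-- Generator of the totally asymmetric simple exclusion on `Ω_n = {0,1}^n`. -/
def LtaB {n : ℕ} (f : (Fin n → Bool) → ℝ) (η : Fin n → Bool) : ℝ :=
  ∑ i : Fin (n-1),
    b2r (η ⟨i.1, by have := i.2; omega⟩) * (1 - b2r (η ⟨i.1+1, by have := i.2; omega⟩)) *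
      (f (swapAt η ⟨i.1, by have := i.2; omega⟩ ⟨i.1+1, by have := i.2; omega⟩) - f η)

/-- Generator of the symmetric simple exclusion on `Ω_n = {0,1}^n`. -/
def LssB {n : ℕ} (f : (Fin n → Bool) → ℝ) (η : Fin n → Bool) : ℝ :=
  ∑ i : Fin (n-1),
    (f (swapAt η ⟨i.1, by have := i.2; omega⟩ ⟨i.1+1, by have := i.2; omega⟩) - f η)

/-- The Dirichlet form of the symmetric simple exclusion:
`𝔇_n(μ) = (1/2) Σ_η Σ_{i=1}^{n-1} (√μ(η^{i,i+1}) − √μ(η))²`. -/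
noncomputable def dirForm {n : ℕ} (μ : (Fin n → Bool) → ℝ) : ℝ :=
  (1/2) * ∑ η : Fin n → Bool, ∑ i : Fin (n-1),
    (Real.sqrt (μ (swapAt η ⟨i.1, by have := i.2; omega⟩ ⟨i.1+1, by have := i.2; omega⟩))
      - Real.sqrt (μ η))^2

/-!
The generator `p L_ta + s L_ss` exchanges the sites `i` and `i + 1` at rate
`c η = p η_i (1 - η_{i+1}) + s`, so it suffices to treat a single bond. There,
`x (log y - log x) ≤ 2 √x (√y - √x) = -(√y - √x)² + (y - x)` bounds the contribution of `η` by
a square plus a term antisymmetric in `η` and the exchanged configuration `η'`. Pairing `η` with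
`η'`, the square acquires the symmetrized rate `(c η + c η') / 2`, which is `p / 2 + s` unless
`η' = η`, and the antisymmetric term the factor `c η' - c η = p (η_{i+1} - η_i)`, whose sum over
the bonds telescopes.
-/

theorem mul_log_sub_log_le_two_mul_sqrt {x y : ℝ} (hx : 0 < x) (hy : 0 < y) :
    x * (Real.log y - Real.log x) ≤ 2 * √x * (√y - √x) := by
  have hsx : 0 < √x := Real.sqrt_pos.2 hx
  have hsy : 0 < √y := Real.sqrt_pos.2 hy
  have hlog : Real.log y - Real.log x = 2 * Real.log (√y / √x) := by
    rw [Real.log_div hsy.ne' hsx.ne', Real.log_sqrt hy.le, Real.log_sqrt hx.le]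
    ring
  calc x * (Real.log y - Real.log x)
      = 2 * x * Real.log (√y / √x) := by rw [hlog]; ring
    _ ≤ 2 * x * (√y / √x - 1) := by
        gcongr
        exact Real.log_le_sub_one_of_pos (div_pos hsy hsx)
    _ = 2 * √x * (√y - √x) := by
        field_simp
        rw [Real.sq_sqrt hx.le]

theorem mul_log_sub_log_le_neg_sq_add {x y : ℝ} (hx : 0 < x) (hy : 0 < y) :
    x * (Real.log y - Real.log x) ≤ -(√y - √x) ^ 2 + (y - x) := by
  have hsq : 2 * √x * (√y - √x) = -(√y - √x) ^ 2 + (y - x) := by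
    linear_combination Real.sq_sqrt hy.le - Real.sq_sqrt hx.le
  exact (mul_log_sub_log_le_two_mul_sqrt hx hy).trans_eq hsq

section Involution

variable {α : Type*} [Fintype α] {σ : α → α}

theorem sum_le_sum_of_add_involutive_le {F G : α → ℝ} (hσ : Function.Involutive σ)
    (h : ∀ x, F x + F (σ x) ≤ G x + G (σ x)) : ∑ x, F x ≤ ∑ x, G x := by
  have hle : ∑ x, (F x + F (σ x)) ≤ ∑ x, (G x + G (σ x)) := sum_le_sum fun x _ => h x
  rw [sum_add_distrib, sum_add_distrib, hσ.bijective.sum_comp, hσ.bijective.sum_comp] at hle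
  linarith

theorem sum_mul_rate_mul_log_involutive_le {c μ : α → ℝ} (hσ : Function.Involutive σ)
    (hc : ∀ x, 0 ≤ c x) (hμ : ∀ x, 0 < μ x) :
    ∑ x, μ x * (c x * (Real.log (μ (σ x)) - Real.log (μ x)))
      ≤ ∑ x, (-((c x + c (σ x)) / 2) * (√(μ (σ x)) - √(μ x)) ^ 2
          + (c (σ x) - c x) * μ x) := by
  refine sum_le_sum_of_add_involutive_le hσ fun x => ?_
  rw [hσ x]
  have hx := mul_le_mul_of_nonneg_left
    (mul_log_sub_log_le_neg_sq_add (hμ x) (hμ (σ x))) (hc x)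
  have hσx := mul_le_mul_of_nonneg_left
    (mul_log_sub_log_le_neg_sq_add (hμ (σ x)) (hμ x)) (hc (σ x))
  linarith

end Involution

section Exchange

variable {n : ℕ}

theorem swapAt_apply_left (η : Fin n → Bool) (i j : Fin n) : swapAt η i j i = η j := by
  simp [swapAt]

theorem swapAt_apply_right (η : Fin n → Bool) (i j : Fin n) : swapAt η i j j = η i := by
  simp [swapAt]

theorem swapAt_involutive (i j : Fin n) :
    Function.Involutive fun η : Fin n → Bool => swapAt η i j := fun η => by
  funext k
  simp [swapAt]

theorem swapAt_eq_self {η : Fin n → Bool} {i j : Fin n} (h : η i = η j) :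
    swapAt η i j = η := by
  funext k
  simp only [swapAt, Function.comp_apply, Equiv.swap_apply_def]
  split_ifs <;> simp_all

/-- The rate `p η_i (1 - η_j) + s` at which the asymmetric simple exclusion process with generator
`p L_ta + s L_ss` exchanges the contents of the sites `i` and `j`. The bond is oriented from `i` to
`j`, and `p` may be negative, which reverses the drift. -/
def asepRate (p s : ℝ) (i j : Fin n) (η : Fin n → Bool) : ℝ :=
  p * (b2r (η i) * (1 - b2r (η j))) + s

variable {p s : ℝ}

theorem asepRate_nonneg (hs : 0 ≤ s) (hps : 0 ≤ p + s) (i j : Fin n) (η : Fin n → Bool) :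
    0 ≤ asepRate p s i j η := by
  cases hi : η i <;> cases hj : η j <;> simp [asepRate, b2r, hi, hj, hs, hps]

theorem asepRate_swapAt (p s : ℝ) (i j : Fin n) (η : Fin n → Bool) :
    asepRate p s i j (swapAt η i j) = asepRate p s j i η := by
  rw [asepRate, swapAt_apply_left, swapAt_apply_right, asepRate]

theorem asepRate_sub_asepRate_comm (p s : ℝ) (i j : Fin n) (η : Fin n → Bool) :
    asepRate p s j i η - asepRate p s i j η = p * (b2r (η j) - b2r (η i)) := by
  simp only [asepRate]
  ring

theorem asepRate_add_asepRate_comm (p s : ℝ) {i j : Fin n} {η : Fin n → Bool}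
    (h : η i ≠ η j) : asepRate p s i j η + asepRate p s j i η = p + 2 * s := by
  cases hi : η i <;> cases hj : η j <;> simp_all [asepRate, b2r] <;> ring

theorem sum_mul_asepRate_mul_log_swapAt_le {μ : (Fin n → Bool) → ℝ} (hs : 0 ≤ s)
    (hps : 0 ≤ p + s) (hμ : ∀ η, 0 < μ η) (i j : Fin n) :
    ∑ η, μ η * (asepRate p s i j η * (Real.log (μ (swapAt η i j)) - Real.log (μ η)))
      ≤ -(p + 2 * s) * (1 / 2 * ∑ η, (√(μ (swapAt η i j)) - √(μ η)) ^ 2)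
        + p * ∑ η, (b2r (η j) - b2r (η i)) * μ η := by
  refine (sum_mul_rate_mul_log_involutive_le (swapAt_involutive i j)
    (asepRate_nonneg hs hps i j) hμ).trans_eq ?_
  simp only [asepRate_swapAt, asepRate_sub_asepRate_comm, mul_sum, ← sum_add_distrib]
  refine sum_congr rfl fun η _ => ?_
  obtain h | h := eq_or_ne (η i) (η j)
  · rw [swapAt_eq_self h]
    ring
  · rw [asepRate_add_asepRate_comm p s h]
    ring

end Exchange

section Segment

variable {m : ℕ}

theorem mul_LtaB_add_mul_LssB (p s : ℝ) (f : (Fin (m + 1) → Bool) → ℝ)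
    (η : Fin (m + 1) → Bool) :
    p * LtaB f η + s * LssB f η
      = ∑ i : Fin m, asepRate p s i.castSucc i.succ η
          * (f (swapAt η i.castSucc i.succ) - f η) := by
  rw [LtaB, LssB, mul_sum, mul_sum, ← sum_add_distrib]
  refine sum_congr rfl fun i _ => ?_
  simp only [asepRate, add_mul, mul_assoc]
  rfl

theorem dirForm_eq_sum_bonds (μ : (Fin (m + 1) → Bool) → ℝ) :
    dirForm μ
      = 1 / 2 * ∑ i : Fin m, ∑ η, (√(μ (swapAt η i.castSucc i.succ)) - √(μ η)) ^ 2 := by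
  rw [dirForm, sum_comm]
  rfl

theorem sum_fin_succ_sub_castSucc {M : Type*} [AddCommGroup M] (g : Fin (m + 1) → M) :
    ∑ i : Fin m, (g i.succ - g i.castSucc) = g (Fin.last m) - g 0 := by
  rw [sum_sub_distrib, sub_eq_sub_iff_add_eq_add, add_comm, ← Fin.sum_univ_succ,
    Fin.sum_univ_castSucc, add_comm]

theorem sum_sum_b2r_succ_sub_castSucc_mul (μ : (Fin (m + 1) → Bool) → ℝ) :
    ∑ i : Fin m, ∑ η : Fin (m + 1) → Bool, (b2r (η i.succ) - b2r (η i.castSucc)) * μ η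
      = ∑ η : Fin (m + 1) → Bool, (b2r (η (Fin.last m)) - b2r (η 0)) * μ η := by
  rw [sum_comm]
  refine sum_congr rfl fun η _ => ?_
  rw [← sum_mul, sum_fin_succ_sub_castSucc fun k => b2r (η k)]

theorem stmt15_general {p s : ℝ} (hs : 0 ≤ s) (hps : 0 ≤ p + s)
    {μ : (Fin (m + 1) → Bool) → ℝ} (hμ : ∀ η, 0 < μ η) :
    ∑ η, μ η * (p * LtaB (fun ζ => Real.log (μ ζ)) η + s * LssB (fun ζ => Real.log (μ ζ)) η)
      ≤ -(p + 2 * s) * dirForm μ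
        + p * ∑ η : Fin (m + 1) → Bool, (b2r (η (Fin.last m)) - b2r (η 0)) * μ η := by
  calc ∑ η, μ η *
        (p * LtaB (fun ζ => Real.log (μ ζ)) η + s * LssB (fun ζ => Real.log (μ ζ)) η)
      = ∑ i : Fin m, ∑ η, μ η * (asepRate p s i.castSucc i.succ η
          * (Real.log (μ (swapAt η i.castSucc i.succ)) - Real.log (μ η))) := by
        simp only [mul_LtaB_add_mul_LssB, mul_sum]
        exact sum_comm
    _ ≤ ∑ i : Fin m,
          (-(p + 2 * s) * (1 / 2 * ∑ η, (√(μ (swapAt η i.castSucc i.succ)) - √(μ η)) ^ 2)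
            + p * ∑ η : Fin (m + 1) → Bool,
                (b2r (η i.succ) - b2r (η i.castSucc)) * μ η) :=
        sum_le_sum fun i _ => sum_mul_asepRate_mul_log_swapAt_le hs hps hμ i.castSucc i.succ
    _ = -(p + 2 * s) * dirForm μ
          + p * ∑ η : Fin (m + 1) → Bool, (b2r (η (Fin.last m)) - b2r (η 0)) * μ η := by
        rw [sum_add_distrib, ← mul_sum, ← mul_sum, ← mul_sum, ← dirForm_eq_sum_bonds,
          sum_sum_b2r_succ_sub_castSucc_mul]

end Segment

/-- The bulk entropy-production estimate in the proof of Lemma 3.3: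
`Σ_η μ(η) (pL_ta + sL_ss)[log μ](η) ≤ −(p+2s) 𝔇_n(μ) + p Σ_η (η_n − η₁) μ(η)`. -/
theorem stmt15 (n : ℕ) (hn : 2 ≤ n) (p s : ℝ) (hp : 0 ≤ p) (hs : 0 ≤ s)
    (μ : (Fin n → Bool) → ℝ) (hpos : ∀ η, 0 < μ η)
    (hsum : ∑ η : Fin n → Bool, μ η = 1) :
    ∑ η : Fin n → Bool, μ η *
        (p * LtaB (fun ζ => Real.log (μ ζ)) η + s * LssB (fun ζ => Real.log (μ ζ)) η)
      ≤ -(p + 2*s) * dirForm μ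
        + p * ∑ η : Fin n → Bool,
            (b2r (η ⟨n-1, by omega⟩) - b2r (η ⟨0, by omega⟩)) * μ η := by
  obtain ⟨m, rfl⟩ : ∃ m, n = m + 1 := Nat.exists_eq_add_of_le' (by omega)
  exact stmt15_general hs (add_nonneg hp hs) hpos
end

section
/- Fix integers k ≥ 1 and 1 ≤ ℓ ≤ 2k−1, and ρ ∈ [0,1]. Let ν_ρ be the Bernoulli product measure with density ρ on {0,1}^{2k−1}, let f : {0,1}^ℓ → [0,1], and set ⟨f⟩(ρ) = E_{ν_ρ}[f(η₁,…,η_ℓ)]. Then for every a ∈ ℝ, log E_{ν_ρ}[ exp( a ( (2k−ℓ)^{−1} Σ_{i=0}^{2k−ℓ−1} f(η_{i+1},…,η_{i+ℓ}) − ⟨f⟩(ρ) ) ) ] ≤ ℓ a² / (8(2k−ℓ)). (The block exponential moment bound obtained via Hoeffding's lemma and the generalized Hölder inequality in the proof of Lemma 3.2.) -/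
open Finset

/-- Density of the Bernoulli product measure with parameter `ρ` on `{0,1}^N`. -/
def bern (N : ℕ) (ρ : ℝ) (η : Fin N → Bool) : ℝ :=
  ∏ i : Fin N, (if η i then ρ else 1 - ρ)

open MeasureTheory ProbabilityTheory
open scoped NNReal

/-!
The windows starting at `i` and `i'` are disjoint as soon as `i ≡ i' [MOD ℓ]` and `i ≠ i'`, so
colouring the windows by their starting point modulo `ℓ` splits the window sum into `ℓ` sums of
independent terms. By Hoeffding's lemma each term is sub-Gaussian, and parameters add up inside a
colour class. The colour classes depend on each other, but by Hölder's inequality the square roots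
of their parameters add up, and Cauchy–Schwarz then costs exactly a factor `ℓ`.
-/

section Independence

variable {Ω ι : Type*} {κ : ι → Type*} {𝓧 : (i : ι) → κ i → Type*} {mΩ : MeasurableSpace Ω}
  {m𝓧 : ∀ i j, MeasurableSpace (𝓧 i j)} {P : Measure Ω}

lemma iIndepFun_curry [Countable ι] [∀ i, Countable (κ i)] {X : (i : ι) → (j : κ i) → Ω → 𝓧 i j}
    (mX : ∀ i j, AEMeasurable (X i j) P)
    (hX : iIndepFun (fun (p : (i : ι) × κ i) ↦ X p.1 p.2) P) :
    iIndepFun (fun i ω j ↦ X i j ω) P := by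
  have := hX.isProbabilityMeasure
  have (i : ι) (j : κ i) : IsProbabilityMeasure (P.map (X i j)) :=
    Measure.isProbabilityMeasure_map (mX i j)
  have hblock (i : ι) :
      P.map (fun ω j ↦ X i j ω) = Measure.infinitePi fun j ↦ P.map (X i j) :=
    (hX.precomp (g := Sigma.mk i) sigma_mk_injective).map_fun_eq_infinitePi_map₀' (mX i)
  rw [iIndepFun_iff_map_fun_eq_infinitePi_map₀' fun i ↦ aemeasurable_pi_iff.2 (mX i)]
  calc P.map (fun ω i j ↦ X i j ω)
    _ = (P.map fun ω (p : (i : ι) × κ i) ↦ X p.1 p.2 ω).map (MeasurableEquiv.piCurry 𝓧) :=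
        (AEMeasurable.map_map_of_aemeasurable (MeasurableEquiv.piCurry 𝓧).measurable.aemeasurable
          (aemeasurable_pi_iff.2 fun (p : (i : ι) × κ i) ↦ mX p.1 p.2)).symm
    _ = Measure.infinitePi fun i ↦ Measure.infinitePi fun j ↦ P.map (X i j) := by
        rw [hX.map_fun_eq_infinitePi_map₀' fun p ↦ mX p.1 p.2,
          Measure.infinitePi_map_piCurry fun i j ↦ P.map (X i j)]
    _ = Measure.infinitePi fun i ↦ P.map (fun ω j ↦ X i j ω) := by simp_rw [hblock]

end Independence

section PiMeasure

variable {ι : Type*} [Fintype ι] {𝓧 : ι → Type*} [∀ i, MeasurableSpace (𝓧 i)]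
  (μ : ∀ i, Measure (𝓧 i)) [∀ i, IsProbabilityMeasure (μ i)]

lemma iIndepFun_eval_pi : iIndepFun Function.eval (Measure.pi μ) :=
  iIndepFun_pi (X := fun _ ↦ id) fun _ ↦ aemeasurable_id

lemma hasLaw_eval_pi (i : ι) : HasLaw (Function.eval i) (μ i) (Measure.pi μ) :=
  (measurePreserving_eval μ i).hasLaw

end PiMeasure

section SubGaussian

variable {Ω ι κ : Type*} {mΩ : MeasurableSpace Ω} {P : Measure Ω} {X : ι → Ω → ℝ} {c : ι → ℝ≥0}

lemma hasSubgaussianMGF_of_le {Y : Ω → ℝ} {v w : ℝ≥0} (hY : HasSubgaussianMGF Y v P)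
    (hvw : v ≤ w) : HasSubgaussianMGF Y w P where
  integrable_exp_mul := hY.integrable_exp_mul
  mgf_le t := (hY.mgf_le t).trans (by gcongr)

lemma hasSubgaussianMGF_finset_sum [IsZeroOrProbabilityMeasure P] {s : Finset ι}
    (hX : ∀ i ∈ s, HasSubgaussianMGF (X i) (c i) P) :
    HasSubgaussianMGF (fun ω ↦ ∑ i ∈ s, X i ω) ((∑ i ∈ s, (c i).sqrt) ^ 2) P := by
  classical
  induction s using Finset.induction_on with
  | empty => simp
  | insert i s his ih =>
    simp_rw [sum_insert his]
    simpa using (hX i (mem_insert_self i s)).add (ih fun j hj ↦ hX j (mem_insert_of_mem hj))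

lemma hasSubgaussianMGF_sum_of_coloring [IsZeroOrProbabilityMeasure P] [Fintype ι] [Fintype κ]
    (color : ι → κ) (hX : ∀ i, HasSubgaussianMGF (X i) (c i) P)
    (hindep : ∀ k, iIndepFun (fun i : {i // color i = k} ↦ X i) P) :
    HasSubgaussianMGF (fun ω ↦ ∑ i, X i ω) (Fintype.card κ * ∑ i, c i) P := by
  classical
  have hclass (k : κ) : HasSubgaussianMGF (fun ω ↦ ∑ i : {i // color i = k}, X i ω)
      (∑ i : {i // color i = k}, c i) P :=
    HasSubgaussianMGF.sum_of_iIndepFun (hindep k) fun i _ ↦ hX i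
  have hsum := hasSubgaussianMGF_finset_sum (s := univ) fun k _ ↦ hclass k
  simp_rw [fun ω ↦ Fintype.sum_fiberwise color fun i ↦ X i ω] at hsum
  refine hasSubgaussianMGF_of_le hsum ?_
  calc (∑ k, (∑ i : {i // color i = k}, c i).sqrt) ^ 2
    _ ≤ Fintype.card κ * ∑ k, (∑ i : {i // color i = k}, c i).sqrt ^ 2 :=
        sq_sum_le_card_mul_sum_sq
    _ = Fintype.card κ * ∑ i, c i := by
        simp_rw [NNReal.sq_sqrt, Fintype.sum_fiberwise color c]

lemma hasSubgaussianMGF_comp_sub_integral_of_hasLaw [IsProbabilityMeasure P]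
    {β : Type*} [MeasurableSpace β] {ν : Measure β} {Y : Ω → β} (hY : HasLaw Y ν P) {f : β → ℝ}
    (hfm : AEMeasurable f ν) {lo hi : ℝ} (hf : ∀ᵐ y ∂ν, f y ∈ Set.Icc lo hi) :
    HasSubgaussianMGF (fun ω ↦ f (Y ω) - ∫ y, f y ∂ν) ((‖hi - lo‖₊ / 2) ^ 2) P := by
  have : IsProbabilityMeasure ν := hY.isProbabilityMeasure_iff.1 inferInstance
  refine HasSubgaussianMGF.of_map (X := fun y ↦ f y - ∫ y, f y ∂ν) hY.aemeasurable ?_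
  rw [hY.map_eq]
  exact hasSubgaussianMGF_of_mem_Icc hfm hf

end SubGaussian

section Windows

variable {n ℓ N : ℕ}

/-- The position of the `j`-th letter of the `i`-th window, when `n` consecutive windows of length
`ℓ` are read off a word of length `N`. All positions are counted from `0`. -/
def windowIndex (hN : n + ℓ ≤ N + 1) (i : Fin n) (j : Fin ℓ) : Fin N :=
  ⟨i + j, by omega⟩

lemma windowIndex_injective (hN : n + ℓ ≤ N + 1) (i : Fin n) :
    Function.Injective (windowIndex hN i) := fun j j' h ↦ by
  simpa [windowIndex, Fin.ext_iff] using h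

lemma windowIndex_injective_of_modEq (hN : n + ℓ ≤ N + 1) {β : Type*} {b : β → Fin n}
    (hb : Function.Injective b) (hmod : ∀ x y, b x ≡ b y [MOD ℓ]) :
    Function.Injective fun p : (_ : β) × Fin ℓ ↦ windowIndex hN (b p.1) p.2 := by
  rintro ⟨x, j⟩ ⟨y, j'⟩ h
  have hadd : (b x + j : ℕ) = b y + j' := congrArg Fin.val h
  have hj : j = j' := Fin.ext <|
    ((hmod x y).add_left_cancel (congrArg (· % ℓ) hadd)).eq_of_lt_of_lt j.isLt j'.isLt
  have hxy : x = y := hb <| Fin.ext <| by omega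
  rw [hxy, hj]

variable {Ω α : Type*} {mΩ : MeasurableSpace Ω} [MeasurableSpace α] {P : Measure Ω}
  {ν : Measure α} {X : Fin N → Ω → α} {f : (Fin ℓ → α) → ℝ}

lemma iIndepFun_windows_of_modEq (hN : n + ℓ ≤ N + 1) (hX : iIndepFun X P)
    (mX : ∀ i, AEMeasurable (X i) P) {β : Type*} [Countable β] {b : β → Fin n}
    (hb : Function.Injective b) (hmod : ∀ x y, b x ≡ b y [MOD ℓ]) :
    iIndepFun (fun x ω j ↦ X (windowIndex hN (b x) j) ω) P :=
  iIndepFun_curry (fun _ _ ↦ mX _) (hX.precomp (windowIndex_injective_of_modEq hN hb hmod))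

lemma hasSubgaussianMGF_sum_windows (hℓ : 0 < ℓ) (hN : n + ℓ ≤ N + 1) (hX : iIndepFun X P)
    (hlaw : ∀ i, HasLaw (X i) ν P) (hfm : AEMeasurable f (Measure.pi fun _ ↦ ν)) {lo hi : ℝ}
    (hf : ∀ᵐ ζ ∂Measure.pi fun _ ↦ ν, f ζ ∈ Set.Icc lo hi) :
    HasSubgaussianMGF
      (fun ω ↦ ∑ i : Fin n,
        (f (fun j ↦ X (windowIndex hN i j) ω) - ∫ ζ, f ζ ∂Measure.pi fun _ ↦ ν))
      (ℓ * (n * (‖hi - lo‖₊ / 2) ^ 2)) P := by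
  have := hX.isProbabilityMeasure
  have hwindow (i : Fin n) :
      HasLaw (fun ω j ↦ X (windowIndex hN i j) ω) (Measure.pi fun _ ↦ ν) P :=
    (hX.precomp (windowIndex_injective hN i)).hasLaw_pi fun _ ↦ hlaw _
  let color (i : Fin n) : Fin ℓ := ⟨i % ℓ, i.1.mod_lt hℓ⟩
  have hindep (r : Fin ℓ) :
      iIndepFun (fun (i : {i // color i = r}) ω j ↦ X (windowIndex hN i j) ω) P :=
    iIndepFun_windows_of_modEq hN hX (fun i ↦ (hlaw i).aemeasurable) Subtype.val_injective
      fun i i' ↦ congrArg Fin.val (i.2.trans i'.2.symm)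
  simpa using hasSubgaussianMGF_sum_of_coloring color
    (fun i ↦ hasSubgaussianMGF_comp_sub_integral_of_hasLaw (hwindow i) hfm hf)
    fun r ↦ (hindep r).comp₀ (fun _ ζ ↦ f ζ - ∫ ζ, f ζ ∂Measure.pi fun _ ↦ ν)
      (fun i ↦ (hwindow i).aemeasurable) fun i ↦ by
        rw [(hwindow i).map_eq]
        exact hfm.sub_const _

theorem stmt19_general (hn : 0 < n) (hℓ : 0 < ℓ) (hN : n + ℓ ≤ N + 1) (hX : iIndepFun X P)
    (hlaw : ∀ i, HasLaw (X i) ν P) (hfm : AEMeasurable f (Measure.pi fun _ ↦ ν)) {lo hi : ℝ}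
    (hf : ∀ᵐ ζ ∂Measure.pi fun _ ↦ ν, f ζ ∈ Set.Icc lo hi) (a : ℝ) :
    cgf (fun ω ↦ (n : ℝ)⁻¹ * ∑ i : Fin n, f (fun j ↦ X (windowIndex hN i j) ω)
        - ∫ ζ, f ζ ∂Measure.pi fun _ ↦ ν) P a
      ≤ ℓ * (a * (hi - lo)) ^ 2 / (8 * n) := by
  have haverage (ω : Ω) :
      (n : ℝ)⁻¹ * ∑ i : Fin n, f (fun j ↦ X (windowIndex hN i j) ω)
          - ∫ ζ, f ζ ∂(Measure.pi fun _ ↦ ν)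
        = (n : ℝ)⁻¹ * ∑ i : Fin n,
          (f (fun j ↦ X (windowIndex hN i j) ω) - ∫ ζ, f ζ ∂Measure.pi fun _ ↦ ν) := by
    rw [sum_sub_distrib, sum_const, card_fin, nsmul_eq_mul]
    field_simp
  simp_rw [cgf, haverage, mgf_const_mul]
  refine ((hasSubgaussianMGF_sum_windows hℓ hN hX hlaw hfm hf).cgf_le _).trans_eq ?_
  push_cast
  rw [Real.norm_eq_abs, div_pow, sq_abs]
  field_simp
  ring

end Windows

lemma integral_pi_bernoulliMeasure {E : Type*} [NormedAddCommGroup E] [NormedSpace ℝ E]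
    [CompleteSpace E] (N : ℕ) {ρ : ℝ} (hρ : ρ ∈ Set.Icc (0 : ℝ) 1) (g : (Fin N → Bool) → E) :
    ∫ η, g η ∂(Measure.pi fun _ : Fin N ↦ bernoulliMeasure true false ⟨ρ, hρ⟩) =
      ∑ η, bern N ρ η • g η := by
  have hsingleton (b : Bool) :
      (bernoulliMeasure true false ⟨ρ, hρ⟩).real {b} = if b then ρ else 1 - ρ := by
    cases b <;> simp
  rw [integral_fintype .of_finite]
  simp_rw [measureReal_def, Measure.pi_singleton, ENNReal.toReal_prod, ← measureReal_def,
    hsingleton, bern]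

/-- The block exponential moment bound in the proof of Lemma 3.2, obtained from
Hoeffding's lemma and the generalized Hölder inequality: for a local function
`f : {0,1}^ℓ → [0,1]` and i.i.d. Bernoulli(ρ) variables `η₁,…,η_{2k−1}`,
`log E[exp(a((2k−ℓ)⁻¹ Σ_{i=0}^{2k−ℓ−1} f(τ_i η) − ⟨f⟩(ρ)))] ≤ ℓa²/(8(2k−ℓ))`. -/
theorem stmt19 (k ℓ : ℕ) (hk : 1 ≤ k) (hl1 : 1 ≤ ℓ) (hl2 : ℓ ≤ 2*k - 1)
    (ρ : ℝ) (hρ : ρ ∈ Set.Icc (0:ℝ) 1)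
    (f : (Fin ℓ → Bool) → ℝ) (hf : ∀ ζ, f ζ ∈ Set.Icc (0:ℝ) 1) (a : ℝ) :
    Real.log (∑ η : Fin (2*k - 1) → Bool, bern (2*k - 1) ρ η *
        Real.exp (a * (((2*k - ℓ : ℕ) : ℝ)⁻¹ *
            (∑ i : Fin (2*k - ℓ),
              f (fun j => η ⟨i.1 + j.1, by have := i.2; have := j.2; omega⟩))
          - ∑ ζ : Fin ℓ → Bool, bern ℓ ρ ζ * f ζ)))
      ≤ (ℓ : ℝ) * a^2 / (8 * ((2*k - ℓ : ℕ) : ℝ)) := by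
  let β : Measure Bool := bernoulliMeasure true false ⟨ρ, hρ⟩
  simpa [cgf, mgf, windowIndex, β, integral_pi_bernoulliMeasure] using
    stmt19_general (n := 2 * k - ℓ) (by omega) hl1 (by omega) (iIndepFun_eval_pi fun _ ↦ β)
      (hasLaw_eval_pi fun _ ↦ β) (measurable_of_finite f).aemeasurable (.of_forall hf) a
end
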